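/- arXiv:1901.00695 — 6 statements merged into one kernel-verified Lean document; each statement's English description precedes it below -/
import Mathlib

section
/- Let a_1,…,a_n be positive integers with each a_j ≥ 2, suppose P := ∏_{j=1}^n a_j is a perfect square with square root Q := √P ∈ ℕ, and set M := (n+2)·(Q+1) and C := ⌈(M/2)·∑_{j=1}^n log₂(a_j)⌉. If S ⊆ {1,…,n} satisfies ∏_{j∈S} a_j > Q (equivalently, ∏_{j∈S} a_j ≥ Q+1), then ∑_{j∈S} ⌊M·log₂(a_j)⌋ ≥ C + 1. -/
/-!
Write `L = log₂`. Since `∑ L(a j) = L(Q²) = 2 L(Q)`, the capacity is `C = ⌈M L(Q)⌉ < M L(Q) + 1`.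
Each floor loses at most `1`, so the total weight of `S` is at least `M L(∏_S a) - n`, which is at
least `M L(Q + 1) - n`. The gap `L(Q + 1) - L(Q)` is at least `1 / (Q + 1)` (`logb_two_succ_gap`),
so multiplying by `M = (n + 2)(Q + 1)` gains at least `n + 2`, and the weight of `S` is at least
`M L(Q) + 2 > C + 1`.
-/

/-- From `log x ≥ 1 - 1/x` at `x = (q + 1) / q`, together with `log 2 ≤ 1`. -/
lemma logb_two_succ_gap (q : ℝ) (hq : 0 < q) :
    1 / (q + 1) ≤ Real.logb 2 (q + 1) - Real.logb 2 q := by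
  have hq1 : 0 < q + 1 := by linarith
  have h := Real.one_sub_inv_le_log_of_pos (div_pos hq1 hq)
  have e : 1 - ((q + 1) / q)⁻¹ = 1 / (q + 1) := by field_simp; ring
  rw [e, Real.log_div hq1.ne' hq.ne'] at h
  have h2 : 0 < Real.log 2 := Real.log_pos (by norm_num)
  have h3 : Real.log 2 ≤ 1 := by linarith [Real.log_two_lt_d9]
  have h0 : 0 < 1 / (q + 1) := by positivity
  rw [Real.logb, Real.logb, ← sub_div, le_div_iff₀ h2]
  nlinarith

/-- If `S` is a set of items of the constructed Product Knapsack instance whose profit product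
exceeds `Q`, then `S` violates the knapsack capacity constraint. -/
theorem large_product_is_infeasible (n : ℕ) (a : Fin n → ℕ) (ha : ∀ j, 2 ≤ a j)
    (Q : ℕ) (hQ : Q * Q = ∏ j, a j) (M : ℕ) (hM : M = (n + 2) * (Q + 1))
    (C : ℤ) (hC : C = ⌈((M : ℝ) / 2) * ∑ j, Real.logb 2 (a j : ℝ)⌉)
    (S : Finset (Fin n)) (hS : Q < ∏ j ∈ S, a j) :
    C + 1 ≤ ∑ j ∈ S, ⌊(M : ℝ) * Real.logb 2 (a j : ℝ)⌋ := by
  have hne : ∀ j, (a j : ℝ) ≠ 0 := fun j => by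
    have := ha j
    exact_mod_cast (by omega : a j ≠ 0)
  have hQ0 : 0 < Q := by
    rcases Nat.eq_zero_or_pos Q with h | h
    · have : 0 < ∏ j, a j := Finset.prod_pos fun j _ => by have := ha j; omega
      simp [h] at hQ
      omega
    · exact h
  have hQR : (0 : ℝ) < Q := by exact_mod_cast hQ0
  have hsum : ∑ j, Real.logb 2 (a j : ℝ) = 2 * Real.logb 2 Q := by
    rw [← Real.logb_prod _ _ fun j _ => hne j, ← Nat.cast_prod, ← hQ, Nat.cast_mul,
      Real.logb_mul hQR.ne' hQR.ne']
    ring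
  have hCle : (C : ℝ) < M * Real.logb 2 Q + 1 := by
    have := Int.ceil_lt_add_one (((M : ℝ) / 2) * ∑ j, Real.logb 2 (a j : ℝ))
    rw [← hC, hsum] at this
    linarith
  have hfloor : (M : ℝ) * Real.logb 2 ((Q : ℝ) + 1) - n
      ≤ ((∑ j ∈ S, ⌊(M : ℝ) * Real.logb 2 (a j : ℝ)⌋ : ℤ) : ℝ) := by
    have h1 : ∑ j ∈ S, ((M : ℝ) * Real.logb 2 (a j : ℝ) - 1)
        ≤ ((∑ j ∈ S, ⌊(M : ℝ) * Real.logb 2 (a j : ℝ)⌋ : ℤ) : ℝ) := by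
      push_cast
      exact Finset.sum_le_sum fun j _ => (Int.sub_one_lt_floor _).le
    have h2 : (S.card : ℝ) ≤ n := by
      exact_mod_cast (Finset.card_le_univ S).trans_eq (Fintype.card_fin n)
    have h3 : Real.logb 2 ((Q : ℝ) + 1) ≤ ∑ j ∈ S, Real.logb 2 (a j : ℝ) := by
      rw [← Real.logb_prod _ _ fun j _ => hne j, ← Nat.cast_prod]
      exact Real.logb_le_logb_of_le (by norm_num) (by positivity) (by exact_mod_cast hS)
    have h4 := mul_le_mul_of_nonneg_left h3 (Nat.cast_nonneg (α := ℝ) M)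
    rw [Finset.sum_sub_distrib, ← Finset.mul_sum] at h1
    simp only [Finset.sum_const, nsmul_eq_mul, mul_one] at h1
    linarith
  have hgap : (n : ℝ) + 2 ≤ M * (Real.logb 2 ((Q : ℝ) + 1) - Real.logb 2 Q) := by
    have h := mul_le_mul_of_nonneg_left (logb_two_succ_gap Q hQR) (Nat.cast_nonneg (α := ℝ) M)
    have e : (M : ℝ) * (1 / ((Q : ℝ) + 1)) = n + 2 := by
      rw [hM]
      push_cast
      field_simp
    rwa [e] at h
  have key : (C : ℝ) + 1 < ((∑ j ∈ S, ⌊(M : ℝ) * Real.logb 2 (a j : ℝ)⌋ : ℤ) : ℝ) := by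
    linarith
  exact_mod_cast key.le
end

section
/- Let a_1,…,a_n be positive integers with each a_j ≥ 2, suppose P := ∏_{j=1}^n a_j is a perfect square with square root Q := √P ∈ ℕ, and set M := (n+2)·(Q+1) and C := ⌈(M/2)·∑_{j=1}^n log₂(a_j)⌉. Then there exists a subset S ⊆ {1,…,n} with ∑_{j∈S} ⌊M·log₂(a_j)⌋ ≤ C and ∏_{j∈S} a_j ≥ Q if and only if there exists a subset S ⊆ {1,…,n} with ∏_{j∈S} a_j = ∏_{j∉S} a_j. -/
/-!
Since `∑ log₂ a_j = log₂ (Q * Q) = 2 log₂ Q`, the capacity is `C = ⌈M log₂ Q⌉`.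
A partition into equal products gives `S` with product `Q`, and rounding the weights down keeps
their sum below `M log₂ Q ≤ C`.

Conversely, if `S` is feasible with product `R ≥ Q`, the rounding loses at most `1` per item and
`1` in the ceiling, so `M log₂ R < M log₂ Q + n + 1`. If `R ≥ Q + 1`, this contradicts
`M log₂ ((Q + 1) / Q) ≥ M / (Q + 1) = n + 2` (`inv_succ_le_logb_sub`). Hence `R = Q`, and the
complement of `S` has product `Q` as well.
-/

/-- The gap between the binary logarithms of consecutive integers, from `1 - 1/x ≤ log x`
at `x = (Q + 1) / Q` and `log 2 ≤ 1`. -/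
lemma inv_succ_le_logb_sub (Q : ℕ) (hQ : 0 < Q) :
    1 / ((Q : ℝ) + 1) ≤ Real.logb 2 ((Q : ℝ) + 1) - Real.logb 2 (Q : ℝ) := by
  have hq : (0 : ℝ) < Q := by exact_mod_cast hQ
  have h1 : 1 / ((Q : ℝ) + 1) ≤ Real.log (((Q : ℝ) + 1) / Q) := by
    have h := Real.one_sub_inv_le_log_of_pos (x := ((Q : ℝ) + 1) / Q) (by positivity)
    have e : 1 - (((Q : ℝ) + 1) / Q)⁻¹ = 1 / ((Q : ℝ) + 1) := by
      field_simp
      ring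
    rwa [e] at h
  have hl2 : 0 < Real.log 2 := Real.log_pos (by norm_num)
  have hl2' : Real.log 2 ≤ 1 := by linarith [Real.log_two_lt_d9]
  rw [← Real.logb_div (by positivity) (by positivity), Real.logb, le_div_iff₀ hl2]
  have h0 : 0 ≤ 1 / ((Q : ℝ) + 1) := by positivity
  nlinarith

/-- Correctness of the reduction from the Product Partition Problem to the Product Knapsack
Problem: the constructed PKP instance has a feasible solution of objective value at least `Q`
if and only if the given PPP instance is a yes-instance. -/
theorem reduction_correctness (n : ℕ) (a : Fin n → ℕ) (ha : ∀ j, 2 ≤ a j)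
    (Q : ℕ) (hQ : Q * Q = ∏ j, a j) (M : ℕ) (hM : M = (n + 2) * (Q + 1))
    (C : ℤ) (hC : C = ⌈((M : ℝ) / 2) * ∑ j, Real.logb 2 (a j : ℝ)⌉) :
    (∃ S : Finset (Fin n),
        ∑ j ∈ S, ⌊(M : ℝ) * Real.logb 2 (a j : ℝ)⌋ ≤ C ∧ Q ≤ ∏ j ∈ S, a j) ↔
      (∃ S : Finset (Fin n), ∏ j ∈ S, a j = ∏ j ∈ Sᶜ, a j) := by
  have hpos : ∀ S : Finset (Fin n), 0 < ∏ j ∈ S, a j := fun S =>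
    Finset.prod_pos fun j _ => by have := ha j; omega
  have hQ0 : 0 < Q := by
    have h := hpos Finset.univ
    rw [← hQ] at h
    exact Nat.pos_of_mul_pos_left h
  have hq : (0 : ℝ) < Q := by exact_mod_cast hQ0
  have hsum : ∀ S : Finset (Fin n),
      ∑ j ∈ S, Real.logb 2 (a j : ℝ) = Real.logb 2 ((∏ j ∈ S, a j : ℕ) : ℝ) := by
    intro S
    rw [Nat.cast_prod, Real.logb_prod]
    intro j _
    have := ha j
    exact_mod_cast (by omega : a j ≠ 0)
  have hC' : C = ⌈(M : ℝ) * Real.logb 2 (Q : ℝ)⌉ := by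
    rw [hC, hsum, ← hQ, Nat.cast_mul, Real.logb_mul hq.ne' hq.ne']
    congr 1
    ring
  have hcompl : ∀ S : Finset (Fin n), (∏ j ∈ S, a j) * ∏ j ∈ Sᶜ, a j = Q * Q := fun S => by
    rw [hQ, Finset.prod_mul_prod_compl]
  constructor
  · rintro ⟨S, hS, hR⟩
    refine ⟨S, ?_⟩
    have hRQ : ∏ j ∈ S, a j = Q := by
      by_contra hne
      have hlt : Q + 1 ≤ ∏ j ∈ S, a j := by omega
      have hlog : Real.logb 2 ((Q : ℝ) + 1) ≤ ∑ j ∈ S, Real.logb 2 (a j : ℝ) := by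
        rw [hsum]
        exact Real.logb_le_logb_of_le (by norm_num) (by positivity) (by exact_mod_cast hlt)
      have hcard : (S.card : ℝ) ≤ n := by
        exact_mod_cast (Finset.card_le_univ S).trans_eq (Fintype.card_fin n)
      have hfloor : (M : ℝ) * ∑ j ∈ S, Real.logb 2 (a j : ℝ) - S.card
          ≤ ((∑ j ∈ S, ⌊(M : ℝ) * Real.logb 2 (a j : ℝ)⌋ : ℤ) : ℝ) := by
        have h : ∑ j ∈ S, ((M : ℝ) * Real.logb 2 (a j : ℝ) - 1)
            ≤ ∑ j ∈ S, ((⌊(M : ℝ) * Real.logb 2 (a j : ℝ)⌋ : ℤ) : ℝ) :=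
          Finset.sum_le_sum fun j _ => (Int.sub_one_lt_floor _).le
        rw [Finset.sum_sub_distrib, ← Finset.mul_sum] at h
        simpa using h
      have hSC : ((∑ j ∈ S, ⌊(M : ℝ) * Real.logb 2 (a j : ℝ)⌋ : ℤ) : ℝ) ≤ C := by
        exact_mod_cast hS
      have hCl : (C : ℝ) < (M : ℝ) * Real.logb 2 (Q : ℝ) + 1 := by
        rw [hC']
        exact Int.ceil_lt_add_one _
      have hM0 : (0 : ℝ) ≤ M := Nat.cast_nonneg M
      have hgap := mul_le_mul_of_nonneg_left (inv_succ_le_logb_sub Q hQ0) hM0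
      have hMQ : (M : ℝ) * (1 / ((Q : ℝ) + 1)) = n + 2 := by
        rw [hM]
        push_cast
        field_simp
      have hmul := mul_le_mul_of_nonneg_left hlog hM0
      rw [hMQ, mul_sub] at hgap
      linarith
    have h := hcompl S
    rw [hRQ] at h ⊢
    exact (Nat.eq_of_mul_eq_mul_left hQ0 h).symm
  · rintro ⟨S, hS⟩
    have hRQ : ∏ j ∈ S, a j = Q := by
      have h := hcompl S
      rw [← hS] at h
      exact Nat.mul_self_inj.mp h
    refine ⟨S, ?_, hRQ.ge⟩
    have h : ((∑ j ∈ S, ⌊(M : ℝ) * Real.logb 2 (a j : ℝ)⌋ : ℤ) : ℝ) ≤ C := by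
      calc ((∑ j ∈ S, ⌊(M : ℝ) * Real.logb 2 (a j : ℝ)⌋ : ℤ) : ℝ)
          ≤ ∑ j ∈ S, (M : ℝ) * Real.logb 2 (a j : ℝ) := by
            rw [Int.cast_sum]
            exact Finset.sum_le_sum fun j _ => Int.floor_le _
        _ = (M : ℝ) * Real.logb 2 (Q : ℝ) := by rw [← Finset.mul_sum, hsum, hRQ]
        _ ≤ C := by
            rw [hC']
            exact Int.le_ceil _
    exact_mod_cast h
end

section
/- Let ε ∈ (0,1), n ∈ ℕ with n ≥ 1, and p_max ≥ 2 a real number, and set ε' := −log₂(1−ε)/(n·log₂(p_max)). Suppose S^A and S* are finite sets of items with nonzero integer profits p_j such that ∑_{j∈S^A} log₂(|p_j|) ≥ (1−ε')·∑_{j∈S*} log₂(|p_j|), and that z* := ∏_{j∈S*} |p_j| satisfies 1 ≤ z* ≤ p_max^n. Then ∏_{j∈S^A} |p_j| ≥ (1−ε)·z*. -/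
/-!
Taking logarithms turns both products into sums. Since `log₂ z* ≤ n · log₂ pmax`, the additive
loss `ε' · log₂ z*` is at most `-log₂ (1 - ε)`, so
`log₂ ((1 - ε) z*) = log₂ (1 - ε) + log₂ z* ≤ ∑ j ∈ SA, log₂ |p j|`,
and monotonicity of `log₂` gives the claim.
-/

/-- Second part of the FPTAS analysis: if the logarithmized profit of `S^A` is at least a
`(1−ε')` fraction of that of `S*` (with `ε' := −log₂(1−ε)/(n·log₂ p_max)`), and the optimal
value `z* = ∏_{j∈S*} |p j|` satisfies `1 ≤ z* ≤ p_max^n`, then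
`∏_{j∈S^A} |p j| ≥ (1−ε)·z*`. -/
theorem fptas_exponentiation_step {ι : Type*} (ε : ℝ) (hε0 : 0 < ε) (hε1 : ε < 1)
    (n : ℕ) (hn : 1 ≤ n) (pmax : ℝ) (hpmax : 2 ≤ pmax)
    (p : ι → ℤ) (hp : ∀ j, p j ≠ 0) (SA Sstar : Finset ι)
    (hsum : (1 - (-Real.logb 2 (1 - ε) / (n * Real.logb 2 pmax))) *
        ∑ j ∈ Sstar, Real.logb 2 |(p j : ℝ)| ≤ ∑ j ∈ SA, Real.logb 2 |(p j : ℝ)|)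
    (hz1 : 1 ≤ ∏ j ∈ Sstar, |p j|)
    (hz2 : ((∏ j ∈ Sstar, |p j| : ℤ) : ℝ) ≤ pmax ^ n) :
    (1 - ε) * ((∏ j ∈ Sstar, |p j| : ℤ) : ℝ) ≤ ((∏ j ∈ SA, |p j| : ℤ) : ℝ) := by
  have hprod (S : Finset ι) : Real.logb 2 ((∏ j ∈ S, |p j| : ℤ) : ℝ) =
      ∑ j ∈ S, Real.logb 2 |(p j : ℝ)| := by
    push_cast
    exact Real.logb_prod _ _ fun j _ => abs_ne_zero.mpr (Int.cast_ne_zero.mpr (hp j))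
  have hA : (0 : ℝ) < ((∏ j ∈ SA, |p j| : ℤ) : ℝ) :=
    Int.cast_pos.mpr (Finset.prod_pos fun j _ => abs_pos.mpr (hp j))
  have hz : (0 : ℝ) < ((∏ j ∈ Sstar, |p j| : ℤ) : ℝ) := Int.cast_pos.mpr (by omega)
  have hε : 0 < 1 - ε := by linarith
  rw [← hprod, ← hprod] at hsum
  have hM : 0 < n * Real.logb 2 pmax :=
    mul_pos (Nat.cast_pos.mpr hn) (Real.logb_pos one_lt_two (by linarith))
  have hzM : Real.logb 2 ((∏ j ∈ Sstar, |p j| : ℤ) : ℝ) ≤ n * Real.logb 2 pmax := by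
    rw [← Real.logb_pow]
    exact Real.logb_le_logb_of_le one_lt_two hz hz2
  have hneg : 0 ≤ -Real.logb 2 (1 - ε) :=
    neg_nonneg.mpr (Real.logb_nonpos one_lt_two hε.le (by linarith))
  have hloss : -Real.logb 2 (1 - ε) / (n * Real.logb 2 pmax) *
      Real.logb 2 ((∏ j ∈ Sstar, |p j| : ℤ) : ℝ) ≤ -Real.logb 2 (1 - ε) := by
    rw [div_mul_eq_mul_div, div_le_iff₀ hM]
    exact mul_le_mul_of_nonneg_left hzM hneg
  rw [← Real.logb_le_logb one_lt_two (mul_pos hε hz) hA, Real.logb_mul hε.ne' hz.ne']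
  linarith
end

section
/- Consider an instance of the Product Knapsack Problem satisfying the standing assumptions with p_max ≥ 2, let ε ∈ (0,1), set K := ε/n², and define the scaled profits p̃_j := ⌊log₂(|p_j|)/K⌋ for each item j. Let S^A be a feasible set with an even number of negative-profit items that maximizes ∑_{j∈S} p̃_j over all feasible sets S with an even number of negative-profit items. Then ∏_{j∈S^A} p_j ≥ (1−ε)·z*, where z* is the maximum of ∏_{j∈S} p_j over all feasible sets S. -/
/-!
Write `K = ε / n²` and let `S*` attain `z*`. As the empty set is feasible, `z* ≥ 1`, so `S*` has an
even number of negative items and competes with `SA` for the total scaled profit. Rounding down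
loses less than `K` per item of `S*` (`sum_sub_le_of_floor_sum_le`), so
`log₂ z* - log₂ (∏_{SA} p) ≤ n K = ε / n ≤ ε`. Hence
`∏_{SA} p ≥ 2 ^ (-ε) z* ≥ exp (-ε) z* ≥ (1 - ε) z*`, using `log 2 ≤ 1`.
Products over sets with evenly many negative items are turned into sums of logarithms through
`prod_eq_neg_one_pow_mul`.
-/

theorem prod_eq_neg_one_pow_mul {ι : Type*} (p : ι → ℤ) (S : Finset ι) :
    ∏ j ∈ S, p j = (-1) ^ (S.filter (fun j => p j < 0)).card * ∏ j ∈ S, |p j| := by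
  have h : ∀ j ∈ S, p j = (if p j < 0 then -1 else 1) * |p j| := by
    intro j _
    split_ifs with hj
    · rw [abs_of_neg hj]; ring
    · rw [abs_of_nonneg (not_lt.mp hj)]; ring
  rw [Finset.prod_congr rfl h, Finset.prod_mul_distrib, Finset.prod_ite]
  simp

theorem logb_prod_of_even {ι : Type*} (p : ι → ℤ) (hp : ∀ j, p j ≠ 0) (S : Finset ι)
    (hS : Even (S.filter (fun j => p j < 0)).card) :
    0 < ((∏ j ∈ S, p j : ℤ) : ℝ) ∧
      Real.logb 2 ((∏ j ∈ S, p j : ℤ) : ℝ) = ∑ j ∈ S, Real.logb 2 |(p j : ℝ)| := by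
  have hprod : ((∏ j ∈ S, p j : ℤ) : ℝ) = ∏ j ∈ S, |(p j : ℝ)| := by
    rw [prod_eq_neg_one_pow_mul, hS.neg_one_pow]
    push_cast
    ring
  have hpos : ∀ j, 0 < |(p j : ℝ)| := fun j => abs_pos.mpr (by exact_mod_cast hp j)
  rw [hprod]
  exact ⟨Finset.prod_pos fun j _ => hpos j, Real.logb_prod _ _ fun j _ => (hpos j).ne'⟩

theorem even_card_neg_of_prod_pos {ι : Type*} (p : ι → ℤ) (S : Finset ι)
    (h : 0 < ∏ j ∈ S, p j) : Even (S.filter (fun j => p j < 0)).card := by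
  by_contra hodd
  rw [prod_eq_neg_one_pow_mul, (Nat.not_even_iff_odd.mp hodd).neg_one_pow] at h
  have : 0 ≤ ∏ j ∈ S, |p j| := Finset.prod_nonneg fun j _ => abs_nonneg _
  linarith

/-- Comparing two sets through values rounded down to multiples of `K` costs at most `K` per
item of the set that is being bounded. -/
theorem sum_sub_le_of_floor_sum_le {ι : Type*} (f : ι → ℝ) {K : ℝ} (hK : 0 < K) (S T : Finset ι)
    (h : ∑ j ∈ S, ⌊f j / K⌋ ≤ ∑ j ∈ T, ⌊f j / K⌋) :
    ∑ j ∈ S, f j - S.card * K ≤ ∑ j ∈ T, f j := by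
  have h' : ∑ j ∈ S, (⌊f j / K⌋ : ℝ) ≤ ∑ j ∈ T, (⌊f j / K⌋ : ℝ) := by exact_mod_cast h
  have hS : ∑ j ∈ S, f j / K ≤ ∑ j ∈ S, ((⌊f j / K⌋ : ℝ) + 1) :=
    Finset.sum_le_sum fun j _ => (Int.lt_floor_add_one _).le
  have hT : ∑ j ∈ T, (⌊f j / K⌋ : ℝ) ≤ ∑ j ∈ T, f j / K :=
    Finset.sum_le_sum fun j _ => Int.floor_le _
  rw [Finset.sum_add_distrib, Finset.sum_const, nsmul_one, ← Finset.sum_div] at hS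
  rw [← Finset.sum_div] at hT
  have : (∑ j ∈ S, f j) / K ≤ (∑ j ∈ T, f j) / K + S.card := by linarith
  rw [div_add' _ _ _ hK.ne', div_le_div_iff_of_pos_right hK] at this
  linarith

theorem one_sub_mul_le_of_logb_sub_le {a b ε : ℝ} (ha : 0 < a) (hb : 0 < b) (hε : 0 ≤ ε)
    (h : Real.logb 2 b - ε ≤ Real.logb 2 a) : (1 - ε) * b ≤ a := by
  have hlog : 0 < Real.log 2 := Real.log_pos (by norm_num)
  have hlog1 : Real.log 2 ≤ 1 := by
    have := Real.log_le_sub_one_of_pos (show (0 : ℝ) < 2 by norm_num)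
    linarith
  have hexp : Real.log b - ε ≤ Real.log a := by
    unfold Real.logb at h
    rw [div_sub' hlog.ne', div_le_div_iff_of_pos_right hlog] at h
    nlinarith
  calc (1 - ε) * b ≤ Real.exp (-ε) * b := by
        gcongr
        linarith [Real.add_one_le_exp (-ε)]
    _ = Real.exp (Real.log b - ε) := by
        rw [sub_eq_add_neg, Real.exp_add, Real.exp_log hb, mul_comm]
    _ ≤ Real.exp (Real.log a) := Real.exp_le_exp.mpr hexp
    _ = a := Real.exp_log ha

/-- Correctness of the FPTAS for the Product Knapsack Problem: with `K := ε/n²` and scaled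
profits `p̃ j := ⌊log₂|p j| / K⌋`, any feasible set `S^A` with an even number of negative-profit
items maximizing the total scaled profit among all such sets satisfies
`∏_{j∈S^A} p j ≥ (1−ε)·z*`. -/
theorem fptas_correctness (n : ℕ) (hn : 0 < n) (p : Fin n → ℤ) (w : Fin n → ℕ)
    (C : ℕ) (hC : 0 < C)
    (hwC : ∀ j, w j ≤ C) (hp : ∀ j, p j ≠ 0)
    (hneg : ∀ j, p j < 0 → ∃ j', j' ≠ j ∧ p j' < 0 ∧ w j + w j' ≤ C)
    (hpmax : 2 ≤ Finset.univ.sup'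
      (Finset.univ_nonempty_iff.mpr (Fin.pos_iff_nonempty.mp hn)) (fun j => |p j|))
    (ε : ℝ) (hε0 : 0 < ε) (hε1 : ε < 1)
    (SA : Finset (Fin n)) (hSA_feas : ∑ j ∈ SA, w j ≤ C)
    (hSA_even : Even ((SA.filter (fun j => p j < 0)).card))
    (hSA_opt : ∀ S : Finset (Fin n), ∑ j ∈ S, w j ≤ C →
      Even ((S.filter (fun j => p j < 0)).card) →
      ∑ j ∈ S, ⌊Real.logb 2 |(p j : ℝ)| / (ε / (n : ℝ) ^ 2)⌋ ≤
        ∑ j ∈ SA, ⌊Real.logb 2 |(p j : ℝ)| / (ε / (n : ℝ) ^ 2)⌋)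
    (zstar : ℤ)
    (hz : IsGreatest
      {z : ℤ | ∃ S : Finset (Fin n), ∑ j ∈ S, w j ≤ C ∧ z = ∏ j ∈ S, p j} zstar) :
    (1 - ε) * (zstar : ℝ) ≤ ((∏ j ∈ SA, p j : ℤ) : ℝ) := by
  obtain ⟨⟨S, hSfeas, rfl⟩, hmax⟩ := hz
  have hzpos : 0 < ∏ j ∈ S, p j := by
    have : (1 : ℤ) ≤ ∏ j ∈ S, p j := hmax ⟨∅, by simp, by simp⟩
    omega
  have hSeven := even_card_neg_of_prod_pos p S hzpos
  obtain ⟨hSpos, hSlog⟩ := logb_prod_of_even p hp S hSeven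
  obtain ⟨hApos, hAlog⟩ := logb_prod_of_even p hp SA hSA_even
  have hn1 : (1 : ℝ) ≤ n := by exact_mod_cast hn
  have hK : 0 < ε / (n : ℝ) ^ 2 := by positivity
  have hround := sum_sub_le_of_floor_sum_le (fun j => Real.logb 2 |(p j : ℝ)|) hK S SA
    (hSA_opt S hSfeas hSeven)
  have hcard : (S.card : ℝ) ≤ n := by exact_mod_cast S.card_le_univ.trans (by simp)
  have hloss : S.card * (ε / (n : ℝ) ^ 2) ≤ ε := by
    rw [← mul_div_assoc, div_le_iff₀ (by positivity), mul_comm]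
    gcongr
    nlinarith
  apply one_sub_mul_le_of_logb_sub_le hApos hSpos hε0.le
  rw [hSlog, hAlog]
  linarith
end

section
/- Consider an instance of the Product Knapsack Problem satisfying the standing assumptions, with all weights positive, items sorted so that log₂(|p_1|)/w_1 ≥ … ≥ log₂(|p_n|)/w_n, and let s be the minimal index with ∑_{j=1}^{s} w_j > C (assuming it exists). Let S̄ := {1,…,s−1} be the split solution; let S̄' := S̄ if S̄ contains an even number of negative-profit items, and otherwise S̄' := S̄ ∖ {j⁻} where j⁻ ∈ S̄ is a negative-profit item of minimum |p_{j⁻}|. Define H := max{ ∏_{j∈S̄'} p_j , max{ p_{j₁}·p_{j₂} : j₁ ≠ j₂, p_{j₁} < 0, p_{j₂} < 0, w_{j₁}+w_{j₂} ≤ C } , max{ p_j : p_j > 0 } }. Then H³ ≥ z*, where z* is the maximum of ∏_{j∈S} p_j over all feasible sets S. -/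
/-!
Write `ℓ j = log₂ |p j|`, which is nonnegative because the profits are nonzero integers.
The linear-relaxation bound (`sum_le_sum_Iic_of_sorted`) says that no feasible set has larger
total `ℓ` than the prefix `{j ≤ s}`, whose weight already exceeds the capacity; exponentiating,
`z* ≤ ∏_{j ≤ s} |p j|`. This product splits as `|p s|` times the split solution's product, and the
latter is `∏ S'`, times `|p jm|` in the odd case. Each single factor `|p j|` is at most `H`: directly
if `p j > 0`, and through a feasible pair of negative items otherwise, since the partner has
absolute value at least `1`. Hence `z*` is bounded by a product of at most three factors `≤ H`.
-/

/-- The Dantzig bound: with items sorted by decreasing efficiency `ℓ j / w j`, a set no heavier than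
the prefix `{j ≤ s}` has no larger total value. With `r = ℓ s / w s`, the reduced value
`ℓ j - r * w j` is nonnegative on the prefix and nonpositive off it, so the prefix maximizes its sum. -/
lemma sum_le_sum_Iic_of_sorted {n : ℕ} (l w : Fin n → ℝ) (hw : ∀ j, 0 < w j) (hl : ∀ j, 0 ≤ l j)
    (hsort : ∀ i j, i ≤ j → l j / w j ≤ l i / w i) (s : Fin n) (S : Finset (Fin n))
    (hS : ∑ j ∈ S, w j ≤ ∑ j ∈ Finset.Iic s, w j) :
    ∑ j ∈ S, l j ≤ ∑ j ∈ Finset.Iic s, l j := by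
  obtain ⟨r, hr⟩ : ∃ r, r = l s / w s := ⟨_, rfl⟩
  have hr0 : 0 ≤ r := hr ▸ div_nonneg (hl s) (hw s).le
  have key : ∑ j ∈ S, (l j - r * w j) ≤ ∑ j ∈ Finset.Iic s, (l j - r * w j) := by
    rw [← Finset.filter_univ_mem S, ← Finset.filter_univ_mem (Finset.Iic s)]
    rw [Finset.sum_filter, Finset.sum_filter]
    refine Finset.sum_le_sum fun j _ => ?_
    rcases le_or_gt j s with h | h
    · have h1 : r * w j ≤ l j := (le_div_iff₀ (hw j)).1 (hr ▸ hsort j s h)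
      rw [if_pos (Finset.mem_Iic.2 h)]
      split_ifs <;> linarith
    · have h1 : l j ≤ r * w j := (div_le_iff₀ (hw j)).1 (hr ▸ hsort s j h.le)
      rw [if_neg (fun h' => absurd (Finset.mem_Iic.1 h') (not_le.2 h))]
      split_ifs <;> linarith
  rw [Finset.sum_sub_distrib, Finset.sum_sub_distrib, ← Finset.mul_sum, ← Finset.mul_sum] at key
  linarith [mul_le_mul_of_nonneg_left hS hr0]


/-- Approximation guarantee (a) of algorithm Product Greedy for the Product Knapsack Problem:
the value `H` returned by Product Greedy satisfies `H³ ≥ z*`. -/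
theorem product_greedy_cube_ge_opt (n : ℕ) (p : Fin n → ℤ) (w : Fin n → ℕ)
    (C : ℕ) (hC : 0 < C)
    (hw : ∀ j, 0 < w j) (hwC : ∀ j, w j ≤ C) (hp : ∀ j, p j ≠ 0)
    (hneg : ∀ j, p j < 0 → ∃ j', j' ≠ j ∧ p j' < 0 ∧ w j + w j' ≤ C)
    (hsort : ∀ i j : Fin n, i ≤ j →
      Real.logb 2 |(p j : ℝ)| / (w j : ℝ) ≤ Real.logb 2 |(p i : ℝ)| / (w i : ℝ))
    (s : Fin n) (hs : C < ∑ j ∈ Finset.Iic s, w j)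
    (hsmin : ∀ t : Fin n, t < s → ∑ j ∈ Finset.Iic t, w j ≤ C)
    (S' : Finset (Fin n))
    (hS' : (Even (((Finset.Iio s).filter (fun j => p j < 0)).card) ∧ S' = Finset.Iio s) ∨
      (¬ Even (((Finset.Iio s).filter (fun j => p j < 0)).card) ∧
        ∃ jm ∈ (Finset.Iio s).filter (fun j => p j < 0),
          (∀ j ∈ (Finset.Iio s).filter (fun j => p j < 0), |p jm| ≤ |p j|) ∧
          S' = (Finset.Iio s).erase jm))
    (H : ℤ)
    (hH : IsGreatest (({∏ j ∈ S', p j} : Set ℤ) ∪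
      {z : ℤ | ∃ j₁ j₂ : Fin n, j₁ ≠ j₂ ∧ p j₁ < 0 ∧ p j₂ < 0 ∧ w j₁ + w j₂ ≤ C ∧
        z = p j₁ * p j₂} ∪
      {z : ℤ | ∃ j : Fin n, 0 < p j ∧ z = p j}) H)
    (zstar : ℤ)
    (hz : IsGreatest
      {z : ℤ | ∃ S : Finset (Fin n), ∑ j ∈ S, w j ≤ C ∧ z = ∏ j ∈ S, p j} zstar) :
    zstar ≤ H ^ 3 := by
  have habs : ∀ j, 1 ≤ |p j| := fun j => Int.one_le_abs (hp j)
  have hle : ∀ j, |p j| ≤ H := by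
    intro j
    rcases lt_or_gt_of_ne (hp j) with hj | hj
    · obtain ⟨k, hk, hk0, hkw⟩ := hneg j hj
      have h1 : p j * p k ≤ H :=
        hH.2 (Or.inl (Or.inr ⟨j, k, hk.symm, hj, hk0, hkw, rfl⟩))
      rw [abs_of_neg hj]
      nlinarith
    · rw [abs_of_pos hj]
      exact hH.2 (Or.inr ⟨j, hj, rfl⟩)
  have hH1 : 1 ≤ H := (habs s).trans (hle s)
  have hprodH : ∏ j ∈ S', p j ≤ H := hH.2 (Or.inl (Or.inl rfl))
  -- The adjusted split solution has an even number of negative factors.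
  have heven : Even ((S'.filter (fun j => p j < 0)).card) := by
    rcases hS' with ⟨he, rfl⟩ | ⟨ho, jm, hjm, -, rfl⟩
    · exact he
    · rw [Finset.filter_erase, Finset.card_erase_of_mem hjm]
      exact (Nat.not_even_iff_odd.1 ho).tsub_odd odd_one
  have hprodabs : ∏ j ∈ S', |p j| = ∏ j ∈ S', p j := by
    rw [← Finset.prod_filter_mul_prod_filter_not S' (fun j => p j < 0) (fun j => |p j|),
      ← Finset.prod_filter_mul_prod_filter_not S' (fun j => p j < 0) p]
    congr 1
    · rw [Finset.prod_congr rfl (g := fun j => - p j)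
        (fun j hj => abs_of_neg (Finset.mem_filter.1 hj).2), Finset.prod_neg, heven.neg_one_pow,
        one_mul]
    · exact Finset.prod_congr rfl
        (fun j hj => abs_of_nonneg (not_lt.1 (Finset.mem_filter.1 hj).2))
  have hIio : ∏ j ∈ Finset.Iio s, |p j| ≤ H * H := by
    have h0 : ∏ j ∈ S', |p j| ≤ H := hprodabs ▸ hprodH
    rcases hS' with ⟨-, rfl⟩ | ⟨-, jm, hjm, -, rfl⟩
    · nlinarith
    · rw [← Finset.mul_prod_erase _ _ (Finset.mem_filter.1 hjm).1]
      exact mul_le_mul (hle jm) h0 (Finset.prod_nonneg fun j _ => abs_nonneg _) (by linarith)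
  have hIic : ∏ j ∈ Finset.Iic s, |p j| ≤ H ^ 3 := by
    rw [← Finset.Iio_insert, Finset.prod_insert (by simp)]
    calc |p s| * ∏ j ∈ Finset.Iio s, |p j| ≤ H * (H * H) :=
          mul_le_mul (hle s) hIio (Finset.prod_nonneg fun j _ => abs_nonneg _) (by linarith)
      _ = H ^ 3 := by ring
  obtain ⟨S, hSC, rfl⟩ := hz.1
  refine le_trans ?_ hIic
  refine (le_abs_self _).trans ?_
  rw [Finset.abs_prod]
  have habsR : ∀ j, (1 : ℝ) ≤ |(p j : ℝ)| := fun j => by exact_mod_cast habs j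
  have hposR : ∀ T : Finset (Fin n), 0 < ∏ j ∈ T, |(p j : ℝ)| := fun T =>
    Finset.prod_pos fun j _ => lt_of_lt_of_le one_pos (habsR j)
  have hlog := sum_le_sum_Iic_of_sorted (fun j => Real.logb 2 |(p j : ℝ)|) (fun j => (w j : ℝ))
    (fun j => by exact_mod_cast hw j) (fun j => Real.logb_nonneg one_lt_two (habsR j))
    hsort s S (by exact_mod_cast hSC.trans hs.le)
  have hne : ∀ j, |(p j : ℝ)| ≠ 0 := fun j => (lt_of_lt_of_le one_pos (habsR j)).ne'
  rw [← Real.logb_prod _ _ (fun j _ => hne j), ← Real.logb_prod _ _ (fun j _ => hne j),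
    Real.logb_le_logb one_lt_two (hposR _) (hposR _)] at hlog
  exact_mod_cast hlog
end

section
/- Consider an instance of the Product Knapsack Problem satisfying the standing assumptions, with all weights positive, items sorted so that log₂(|p_1|)/w_1 ≥ … ≥ log₂(|p_n|)/w_n, and let s be the minimal index with ∑_{j=1}^{s} w_j > C (assuming it exists). Let S̄ := {1,…,s−1} be the split solution; let S̄' := S̄ if S̄ contains an even number of negative-profit items, and otherwise S̄' := S̄ ∖ {j⁻} where j⁻ ∈ S̄ is a negative-profit item of minimum |p_{j⁻}|. Define H := max{ ∏_{j∈S̄'} p_j , max{ p_{j₁}·p_{j₂} : j₁ ≠ j₂, p_{j₁} < 0, p_{j₂} < 0, w_{j₁}+w_{j₂} ≤ C } , max{ p_j : p_j > 0 } }. Then H · p_max² ≥ z*, where p_max := max_{j∈N} |p_j| and z* is the maximum of ∏_{j∈S} p_j over all feasible sets S. -/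
/-!
The linear relaxation bound for the knapsack problem with profits `log |p j|` shows that every
feasible set `S` satisfies `∏_{S} |p j| ≤ ∏_{j ≤ s} |p j|` (`prod_abs_le_of_density_le`): the items
`1, …, s` are the densest ones and overfill the knapsack. Hence `z*` is at most the absolute value
of the split solution times `|p s| ≤ p_max`. Making the number of negative items of the split
solution even costs at most one further factor `|p j⁻| ≤ p_max`, and the resulting product is
positive, so it is a lower bound on `H` that loses no more than `p_max²`.
-/

/-- Linear relaxation bound in multiplicative form: if each item of `A` has logarithmic profit
density at least `r ≥ 0`, each item outside `A` has density at most `r`, and `A` weighs at least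
as much as `S`, then the absolute profit product of `A` is at least that of `S`. -/
lemma prod_abs_le_of_density_le {ι : Type*} [DecidableEq ι] (p : ι → ℤ) (w : ι → ℕ)
    (hw : ∀ j, 0 < w j) (hp : ∀ j, p j ≠ 0) (A S : Finset ι) (r : ℝ) (hr : 0 ≤ r)
    (hA : ∀ j ∈ A, r ≤ Real.logb 2 |(p j : ℝ)| / (w j : ℝ))
    (hnA : ∀ j ∉ A, Real.logb 2 |(p j : ℝ)| / (w j : ℝ) ≤ r)
    (hle : ∑ j ∈ S, w j ≤ ∑ j ∈ A, w j) :
    ∏ j ∈ S, |p j| ≤ ∏ j ∈ A, |p j| := by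
  have hwpos : ∀ j, (0 : ℝ) < w j := fun j => by exact_mod_cast hw j
  have hpos : ∀ j, (0 : ℝ) < |(p j : ℝ)| := fun j => abs_pos.mpr (by exact_mod_cast hp j)
  have hw' : ∑ j ∈ S \ A, (w j : ℝ) ≤ ∑ j ∈ A \ S, (w j : ℝ) := by
    rw [Finset.sum_sdiff_le_sum_sdiff]
    exact_mod_cast hle
  have hlog : ∑ j ∈ S, Real.logb 2 |(p j : ℝ)| ≤ ∑ j ∈ A, Real.logb 2 |(p j : ℝ)| := by
    rw [← Finset.sum_sdiff_le_sum_sdiff]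
    calc ∑ j ∈ S \ A, Real.logb 2 |(p j : ℝ)| ≤ ∑ j ∈ S \ A, r * (w j : ℝ) :=
          Finset.sum_le_sum fun j hj =>
            (div_le_iff₀ (hwpos j)).mp (hnA j (Finset.mem_sdiff.mp hj).2)
      _ = r * ∑ j ∈ S \ A, (w j : ℝ) := by rw [Finset.mul_sum]
      _ ≤ r * ∑ j ∈ A \ S, (w j : ℝ) := mul_le_mul_of_nonneg_left hw' hr
      _ = ∑ j ∈ A \ S, r * (w j : ℝ) := by rw [Finset.mul_sum]
      _ ≤ ∑ j ∈ A \ S, Real.logb 2 |(p j : ℝ)| :=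
          Finset.sum_le_sum fun j hj =>
            (le_div_iff₀ (hwpos j)).mp (hA j (Finset.mem_sdiff.mp hj).1)
  rw [← Real.logb_prod _ _ fun j _ => (hpos j).ne', ← Real.logb_prod _ _ fun j _ => (hpos j).ne',
    Real.logb_le_logb one_lt_two (Finset.prod_pos fun j _ => hpos j)
      (Finset.prod_pos fun j _ => hpos j)] at hlog
  exact_mod_cast hlog

lemma prod_eq_neg_one_pow_mul_prod_abs {ι : Type*} (p : ι → ℤ) (A : Finset ι) :
    ∏ j ∈ A, p j = (-1) ^ (A.filter (fun j => p j < 0)).card * ∏ j ∈ A, |p j| := by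
  have h : ∀ j ∈ A, p j = (if p j < 0 then -1 else 1) * |p j| := by
    intro j _
    split_ifs with hj
    · rw [abs_of_neg hj]; ring
    · rw [abs_of_nonneg (not_lt.mp hj)]; ring
  rw [Finset.prod_congr rfl h, Finset.prod_mul_distrib, Finset.prod_ite]
  simp

/-- Approximation guarantee (b) of algorithm Product Greedy for the Product Knapsack Problem:
the value `H` returned by Product Greedy satisfies `H·p_max² ≥ z*`. -/
theorem product_greedy_pmax_sq_ge_opt (n : ℕ) (hn : 0 < n) (p : Fin n → ℤ) (w : Fin n → ℕ)
    (C : ℕ) (hC : 0 < C)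
    (hw : ∀ j, 0 < w j) (hwC : ∀ j, w j ≤ C) (hp : ∀ j, p j ≠ 0)
    (hneg : ∀ j, p j < 0 → ∃ j', j' ≠ j ∧ p j' < 0 ∧ w j + w j' ≤ C)
    (hsort : ∀ i j : Fin n, i ≤ j →
      Real.logb 2 |(p j : ℝ)| / (w j : ℝ) ≤ Real.logb 2 |(p i : ℝ)| / (w i : ℝ))
    (s : Fin n) (hs : C < ∑ j ∈ Finset.Iic s, w j)
    (hsmin : ∀ t : Fin n, t < s → ∑ j ∈ Finset.Iic t, w j ≤ C)
    (S' : Finset (Fin n))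
    (hS' : (Even (((Finset.Iio s).filter (fun j => p j < 0)).card) ∧ S' = Finset.Iio s) ∨
      (¬ Even (((Finset.Iio s).filter (fun j => p j < 0)).card) ∧
        ∃ jm ∈ (Finset.Iio s).filter (fun j => p j < 0),
          (∀ j ∈ (Finset.Iio s).filter (fun j => p j < 0), |p jm| ≤ |p j|) ∧
          S' = (Finset.Iio s).erase jm))
    (H : ℤ)
    (hH : IsGreatest (({∏ j ∈ S', p j} : Set ℤ) ∪
      {z : ℤ | ∃ j₁ j₂ : Fin n, j₁ ≠ j₂ ∧ p j₁ < 0 ∧ p j₂ < 0 ∧ w j₁ + w j₂ ≤ C ∧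
        z = p j₁ * p j₂} ∪
      {z : ℤ | ∃ j : Fin n, 0 < p j ∧ z = p j}) H)
    (pmax : ℤ)
    (hpmax : pmax = Finset.univ.sup'
      (Finset.univ_nonempty_iff.mpr (Fin.pos_iff_nonempty.mp hn)) (fun j => |p j|))
    (zstar : ℤ)
    (hz : IsGreatest
      {z : ℤ | ∃ S : Finset (Fin n), ∑ j ∈ S, w j ≤ C ∧ z = ∏ j ∈ S, p j} zstar) :
    zstar ≤ H * pmax ^ 2 := by
  have hle_pmax : ∀ j, |p j| ≤ pmax := fun j => by
    rw [hpmax]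
    exact Finset.le_sup' (fun j => |p j|) (Finset.mem_univ j)
  have hpabs : ∀ j, 1 ≤ |p j| := fun j => Int.one_le_abs (hp j)
  have hpm : 1 ≤ pmax := (hpabs s).trans (hle_pmax s)
  have hPH : ∏ j ∈ S', p j ≤ H := hH.2 (Or.inl (Or.inl rfl))
  have hIio : 0 < ∏ j ∈ Finset.Iio s, |p j| :=
    Finset.prod_pos fun j _ => abs_pos.mpr (hp j)
  have hbound : zstar ≤ (∏ j ∈ Finset.Iio s, |p j|) * pmax := by
    obtain ⟨S, hS, rfl⟩ := hz.1
    calc ∏ j ∈ S, p j ≤ ∏ j ∈ S, |p j| := by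
          rw [← Finset.abs_prod]; exact le_abs_self _
      _ ≤ ∏ j ∈ Finset.Iic s, |p j| := by
          refine prod_abs_le_of_density_le p w hw hp _ S
            (Real.logb 2 |(p s : ℝ)| / (w s : ℝ)) ?_ ?_ ?_ (hS.trans hs.le)
          · refine div_nonneg (Real.logb_nonneg one_lt_two ?_) (Nat.cast_nonneg _)
            exact_mod_cast hpabs s
          · exact fun j hj => hsort j s (Finset.mem_Iic.mp hj)
          · exact fun j hj => hsort s j (le_of_not_ge fun h => hj (Finset.mem_Iic.mpr h))
      _ = (∏ j ∈ Finset.Iio s, |p j|) * |p s| := by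
          rw [← Finset.Iio_insert, Finset.prod_insert (by simp), mul_comm]
      _ ≤ (∏ j ∈ Finset.Iio s, |p j|) * pmax :=
          mul_le_mul_of_nonneg_left (hle_pmax s) hIio.le
  have hsplit : ∏ j ∈ Finset.Iio s, |p j| ≤ H * pmax := by
    have hsign := prod_eq_neg_one_pow_mul_prod_abs p (Finset.Iio s)
    rcases hS' with ⟨hev, rfl⟩ | ⟨hodd, jm, hjm, -, rfl⟩
    · rw [hev.neg_one_pow, one_mul] at hsign
      rw [hsign] at hPH
      nlinarith
    · obtain ⟨hjs, hjneg⟩ := Finset.mem_filter.mp hjm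
      rw [(Nat.not_even_iff_odd.mp hodd).neg_one_pow, ← Finset.mul_prod_erase _ p hjs] at hsign
      have habs := abs_of_neg hjneg
      -- the sign of the removed item cancels the odd sign of the split solution
      have heq : |p jm| * ∏ j ∈ (Finset.Iio s).erase jm, p j = ∏ j ∈ Finset.Iio s, |p j| := by
        rw [habs]; linarith
      have hpos : 0 < ∏ j ∈ (Finset.Iio s).erase jm, p j :=
        pos_of_mul_pos_right (heq ▸ hIio) (abs_nonneg _)
      rw [← heq, mul_comm]
      exact mul_le_mul hPH (hle_pmax jm) (abs_nonneg _) (hpos.le.trans hPH)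
  calc zstar ≤ (∏ j ∈ Finset.Iio s, |p j|) * pmax := hbound
    _ ≤ H * pmax * pmax := mul_le_mul_of_nonneg_right hsplit (by linarith)
    _ = H * pmax ^ 2 := by ring
end
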